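/- Let a > 0, ε > 0 and μ ∈ ℂ, and suppose there exist ξ₀ ∈ ℝ and a nonnegative integer ℓ₀ such that μ² − (ξ₀ + iε)² = 4π²ℓ₀²/a². Then there exists a sequence (u_j) of smooth functions ℝ² → ℂ, each a-periodic in the second variable and compactly supported in the first variable, and a constant C₀ > 0, such that ∫_{ℝ×(0,a)} e^{2εx} |(−∂_x² − ∂_y² − μ²) u_j(x,y)|² dx dy ≤ C₀ and ∫_{ℝ×(0,a)} |u_j(x,y)|² dx dy ≤ C₀ for all j, while ∫_{ℝ×(0,a)} e^{2εx} |u_j(x,y)|² dx dy → ∞ as j → ∞. -/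

import Mathlib

open MeasureTheory Real

/-- The mixed partial derivative `∂ₓᵖ ∂_yᑫ u` of a function `u : ℝ → ℝ → ℂ`. -/
noncomputable def mixedPartialDeriv (p q : ℕ) (u : ℝ → ℝ → ℂ) (x y : ℝ) : ℂ :=
  iteratedDeriv p (fun s => iteratedDeriv q (u s) y) x

/-!
With `κ = ξ₀ + iε` and `θ = 2πℓ₀/a`, the resonance condition says that the wave `e^{iκx + iθy}`
solves `(−∂ₓ² − ∂_y² − μ²) u = 0`. The weight `e^{2εx}` exactly cancels its exponential decay, so
cutting the wave off by an envelope `φ(rx)` turns weighted `L²` norms on the cylinder into plain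
`L²` norms on the line. As `r → 0` these grow like `r⁻¹` for the cut-off wave, but remain bounded
for its image, where every term carries a derivative of the envelope. Envelopes living on `x > 0`
moreover keep the unweighted norms bounded.
-/

/-- The plane wave `e^{iκx + iθy}` of complex frequency `κ` along the axis of the cylinder and real
frequency `θ` across it, multiplied by an envelope `χ` in the axial variable. -/
noncomputable def cutoffWave (χ : ℝ → ℂ) (κ : ℂ) (θ : ℝ) (x y : ℝ) : ℂ :=
  χ x * Complex.exp (Complex.I * κ * x) * Complex.exp (Complex.I * θ * y)

/-- The conjugated operator `e^{-iκx} (−∂ₓ² − κ²) e^{iκx} = −∂ₓ² − 2iκ ∂ₓ`, acting on the envelope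
of a wave of axial frequency `κ`. -/
noncomputable def conjugatedOperator (κ : ℂ) (χ : ℝ → ℂ) (x : ℝ) : ℂ :=
  -iteratedDeriv 2 χ x - 2 * Complex.I * κ * deriv χ x

lemma contDiff_cexp_const_mul_ofReal (c : ℂ) {n : WithTop ℕ∞} :
    ContDiff ℝ n (fun x : ℝ => Complex.exp (c * x)) :=
  (contDiff_const.mul Complex.ofRealCLM.contDiff).cexp

lemma iteratedDeriv_cexp_const_mul_ofReal (n : ℕ) (c : ℂ) :
    iteratedDeriv n (fun x : ℝ => Complex.exp (c * x)) =
      fun x : ℝ => c ^ n * Complex.exp (c * x) := by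
  induction n with
  | zero => simp
  | succ n ih =>
    funext x
    have hlin : HasDerivAt (fun x : ℝ => c * (x : ℂ)) c x := by
      simpa using (hasDerivAt_id x).ofReal_comp.const_mul c
    rw [iteratedDeriv_succ, ih, (hlin.cexp.const_mul (c ^ n)).deriv]
    ring

section CutoffWave

variable {χ : ℝ → ℂ} {κ : ℂ} {θ : ℝ}

lemma contDiff_cutoffWave {n : WithTop ℕ∞} (hχ : ContDiff ℝ n χ) :
    ContDiff ℝ n (fun p : ℝ × ℝ => cutoffWave χ κ θ p.1 p.2) :=
  ((hχ.comp contDiff_fst).mul ((contDiff_cexp_const_mul_ofReal _).comp contDiff_fst)).mul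
    ((contDiff_cexp_const_mul_ofReal _).comp contDiff_snd)

lemma cutoffWave_add_period {a : ℝ} {ℓ : ℤ} (hθ : θ * a = 2 * π * ℓ) (x y : ℝ) :
    cutoffWave χ κ θ x (y + a) = cutoffWave χ κ θ x y := by
  have hθ' : (θ * a : ℂ) = 2 * π * ℓ := by exact_mod_cast hθ
  have hphase : Complex.I * θ * ((y + a : ℝ) : ℂ) =
      Complex.I * θ * y + ℓ * (2 * π * Complex.I) := by
    push_cast
    linear_combination Complex.I * hθ'
  rw [cutoffWave, hphase, Complex.exp_periodic.int_mul ℓ, cutoffWave]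

lemma mixedPartialDeriv_zero_left_cutoffWave (q : ℕ) (x y : ℝ) :
    mixedPartialDeriv 0 q (cutoffWave χ κ θ) x y =
      (Complex.I * θ) ^ q * cutoffWave χ κ θ x y := by
  have hsplit : cutoffWave χ κ θ x = fun t : ℝ =>
      χ x * Complex.exp (Complex.I * κ * x) * Complex.exp (Complex.I * θ * t) := rfl
  simp only [mixedPartialDeriv, iteratedDeriv_zero, hsplit, iteratedDeriv_const_mul_field,
    iteratedDeriv_cexp_const_mul_ofReal]
  ring

lemma mixedPartialDeriv_two_zero_cutoffWave (hχ : ContDiff ℝ 2 χ) (x y : ℝ) :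
    mixedPartialDeriv 2 0 (cutoffWave χ κ θ) x y =
      -cutoffWave (conjugatedOperator κ χ) κ θ x y - κ ^ 2 * cutoffWave χ κ θ x y := by
  have leibniz := iteratedDeriv_mul (n := 2) (x := x) hχ.contDiffAt
    (contDiff_cexp_const_mul_ofReal (Complex.I * κ)).contDiffAt
  simp only [iteratedDeriv_cexp_const_mul_ofReal, Finset.sum_range_succ, Finset.sum_range_zero,
    iteratedDeriv_zero, iteratedDeriv_one, Nat.choose_zero_right, Nat.choose_one_right,
    Nat.choose_self] at leibniz
  have hsplit : (fun s => cutoffWave χ κ θ s y) = fun s =>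
      (χ * fun t : ℝ => Complex.exp (Complex.I * κ * t)) s * Complex.exp (Complex.I * θ * y) := rfl
  simp only [mixedPartialDeriv, iteratedDeriv_zero]
  rw [hsplit, iteratedDeriv_mul_const_field, leibniz]
  simp only [cutoffWave, conjugatedOperator]
  push_cast
  linear_combination (κ ^ 2 * χ x * Complex.exp (Complex.I * κ * x) *
    Complex.exp (Complex.I * θ * y)) * Complex.I_sq

lemma neg_laplacian_sub_cutoffWave {μ : ℂ} (hχ : ContDiff ℝ 2 χ)
    (hμ : μ ^ 2 = κ ^ 2 + (θ : ℂ) ^ 2) (x y : ℝ) :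
    -mixedPartialDeriv 2 0 (cutoffWave χ κ θ) x y - mixedPartialDeriv 0 2 (cutoffWave χ κ θ) x y
        - μ ^ 2 * cutoffWave χ κ θ x y = cutoffWave (conjugatedOperator κ χ) κ θ x y := by
  rw [mixedPartialDeriv_two_zero_cutoffWave hχ, mixedPartialDeriv_zero_left_cutoffWave, hμ,
    mul_pow, Complex.I_sq]
  ring

variable (χ κ θ)

lemma norm_cutoffWave_sq (x y : ℝ) :
    ‖cutoffWave χ κ θ x y‖ ^ 2 = Real.exp (-(2 * κ.im) * x) * ‖χ x‖ ^ 2 := by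
  have haxial : ‖Complex.exp (Complex.I * κ * x)‖ ^ 2 = Real.exp (-(2 * κ.im) * x) := by
    have hre : (Complex.I * κ * x).re = -(κ.im * x) := by simp
    rw [Complex.norm_exp, hre, ← Real.exp_nat_mul]
    congr 1
    push_cast
    ring
  have hcross : ‖Complex.exp (Complex.I * θ * y)‖ = 1 := by simp [Complex.norm_exp]
  rw [cutoffWave, norm_mul, norm_mul, hcross, mul_one, mul_pow, haxial, mul_comm]

lemma integral_norm_cutoffWave_sq (a : ℝ) :
    ∫ x : ℝ, ∫ y in (0 : ℝ)..a, ‖cutoffWave χ κ θ x y‖ ^ 2 =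
      a * ∫ x, Real.exp (-(2 * κ.im) * x) * ‖χ x‖ ^ 2 := by
  simp only [norm_cutoffWave_sq, intervalIntegral.integral_const, sub_zero, smul_eq_mul,
    integral_const_mul]

lemma integral_exp_mul_norm_cutoffWave_sq (a : ℝ) :
    ∫ x : ℝ, ∫ y in (0 : ℝ)..a, Real.exp (2 * κ.im * x) * ‖cutoffWave χ κ θ x y‖ ^ 2 =
      a * ∫ x, ‖χ x‖ ^ 2 := by
  have hweight (x : ℝ) : Real.exp (2 * κ.im * x) * Real.exp (-(2 * κ.im) * x) = 1 := by
    rw [← Real.exp_add, neg_mul, add_neg_cancel, Real.exp_zero]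
  simp only [norm_cutoffWave_sq, ← mul_assoc, hweight, one_mul, intervalIntegral.integral_const,
    sub_zero, smul_eq_mul, integral_const_mul]

end CutoffWave

lemma integral_exp_neg_mul_norm_sq_le {E : Type*} [NormedAddCommGroup E] {f : ℝ → E} {b M : ℝ}
    (hb : 0 < b) (hf : ∀ x ≤ 0, f x = 0) (hM : ∀ x, ‖f x‖ ≤ M) :
    ∫ x, Real.exp (-b * x) * ‖f x‖ ^ 2 ≤ M ^ 2 / b := by
  have hint : IntegrableOn (fun x : ℝ => Real.exp (-b * x) * M ^ 2) (Set.Ioi 0) :=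
    (exp_neg_integrableOn_Ioi 0 hb).mul_const _
  calc ∫ x, Real.exp (-b * x) * ‖f x‖ ^ 2
      = ∫ x in Set.Ioi 0, Real.exp (-b * x) * ‖f x‖ ^ 2 :=
        (setIntegral_eq_integral_of_forall_compl_eq_zero fun x hx => by
          simp [hf x (not_lt.1 hx)]).symm
    _ ≤ ∫ x in Set.Ioi 0, Real.exp (-b * x) * M ^ 2 :=
        integral_mono_of_nonneg (.of_forall fun x => by positivity) hint
          (.of_forall fun x => by dsimp only; gcongr; exact hM x)
    _ = M ^ 2 / b := by
        rw [integral_mul_const, integral_exp_mul_Ioi (neg_lt_zero.2 hb)]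
        rw [mul_zero, Real.exp_zero, neg_div_neg_eq]
        ring

section Dilation

variable {φ : ℝ → ℂ}

lemma conjugatedOperator_comp_mul_left (κ : ℂ) (hφ : ContDiff ℝ 2 φ) (r x : ℝ) :
    conjugatedOperator κ (fun x => φ (r * x)) x =
      r * (-(r * iteratedDeriv 2 φ (r * x)) - 2 * Complex.I * κ * deriv φ (r * x)) := by
  have hsecond : iteratedDeriv 2 (fun x => φ (r * x)) x = r ^ 2 • iteratedDeriv 2 φ (r * x) :=
    congrFun (iteratedDeriv_comp_const_smul hφ r) x
  rw [conjugatedOperator, hsecond, deriv_comp_mul_left]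
  simp only [Complex.real_smul, Complex.ofReal_pow]
  ring

lemma norm_conjugatedOperator_comp_mul_left_le (κ : ℂ) (hφ : ContDiff ℝ 2 φ) {r : ℝ}
    (hr₀ : 0 ≤ r) (hr₁ : r ≤ 1) (x : ℝ) :
    ‖conjugatedOperator κ (fun x => φ (r * x)) x‖ ≤
      r * (‖iteratedDeriv 2 φ (r * x)‖ + 2 * ‖κ‖ * ‖deriv φ (r * x)‖) := by
  rw [conjugatedOperator_comp_mul_left κ hφ, norm_mul, Complex.norm_of_nonneg hr₀]
  gcongr
  refine (norm_sub_le _ _).trans (add_le_add ?_ (by simp))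
  rw [norm_neg, norm_mul, Complex.norm_of_nonneg hr₀]
  exact mul_le_of_le_one_left (norm_nonneg _) hr₁

-- Squaring gains `r²`, while rescaling the integral costs only `r⁻¹`.
lemma exists_integral_norm_conjugatedOperator_sq_le (κ : ℂ) (hφ : ContDiff ℝ 2 φ)
    (hsupp : HasCompactSupport φ) :
    ∃ C : ℝ, ∀ r : ℝ, 0 < r → r ≤ 1 →
      ∫ x, ‖conjugatedOperator κ (fun x => φ (r * x)) x‖ ^ 2 ≤ C := by
  set G : ℝ → ℝ := fun x => (‖iteratedDeriv 2 φ x‖ + 2 * ‖κ‖ * ‖deriv φ x‖) ^ 2 with hG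
  have hGcont : Continuous G := by
    have := hφ.continuous_iteratedDeriv 2 le_rfl
    have := hφ.continuous_deriv one_le_two
    fun_prop
  have hGsupp : HasCompactSupport G := by
    have hsecond : HasCompactSupport (iteratedDeriv 2 φ) := by
      rw [iteratedDeriv_succ, iteratedDeriv_one]
      exact hsupp.deriv.deriv
    exact hsecond.comp₂_left hsupp.deriv (m := fun z w => (‖z‖ + 2 * ‖κ‖ * ‖w‖) ^ 2) (by simp)
  have hGint : Integrable G := hGcont.integrable_of_hasCompactSupport hGsupp
  refine ⟨∫ x, G x, fun r hr₀ hr₁ => ?_⟩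
  have hpointwise (x : ℝ) :
      ‖conjugatedOperator κ (fun x => φ (r * x)) x‖ ^ 2 ≤ r ^ 2 * G (r * x) := by
    rw [hG, ← mul_pow]
    gcongr
    exact norm_conjugatedOperator_comp_mul_left_le κ hφ hr₀.le hr₁ x
  calc ∫ x, ‖conjugatedOperator κ (fun x => φ (r * x)) x‖ ^ 2
      ≤ ∫ x, r ^ 2 * G (r * x) :=
        integral_mono_of_nonneg (.of_forall fun x => by positivity)
          ((hGint.comp_mul_left' hr₀.ne').const_mul _) (.of_forall hpointwise)
    _ = r * ∫ x, G x := by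
        rw [integral_const_mul, Measure.integral_comp_mul_left, abs_of_pos (inv_pos.2 hr₀),
          smul_eq_mul]
        field_simp
    _ ≤ ∫ x, G x := mul_le_of_le_one_left (integral_nonneg fun x => by positivity) hr₁

end Dilation

lemma tendsto_integral_norm_comp_inv_mul_sq_atTop {φ : ℝ → ℂ} (hφ : Continuous φ)
    (hsupp : HasCompactSupport φ) (hne : φ ≠ 0) :
    Filter.Tendsto (fun R : ℝ => ∫ x, ‖φ (R⁻¹ * x)‖ ^ 2) Filter.atTop Filter.atTop := by
  obtain ⟨x₀, hx₀⟩ := Function.ne_iff.1 hne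
  have hpos : 0 < ∫ x, ‖φ x‖ ^ 2 :=
    Continuous.integral_pos_of_hasCompactSupport_nonneg_nonzero
      (by fun_prop) (hsupp.comp_left (g := fun z : ℂ => ‖z‖ ^ 2) (by simp))
      (fun x => sq_nonneg ‖φ x‖) (pow_ne_zero 2 (norm_ne_zero_iff.2 hx₀))
  have hscale (R : ℝ) : ∫ x, ‖φ (R⁻¹ * x)‖ ^ 2 = |R| * ∫ x, ‖φ x‖ ^ 2 :=
    Measure.integral_comp_inv_mul_left (fun x => ‖φ x‖ ^ 2) R
  simpa only [hscale] using Filter.tendsto_abs_atTop_atTop.atTop_mul_const hpos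

lemma exists_contDiff_hasCompactSupport_eq_zero_of_nonpos :
    ∃ φ : ℝ → ℂ, ContDiff ℝ (⊤ : ℕ∞) φ ∧ HasCompactSupport φ ∧ (∀ x ≤ 0, φ x = 0) ∧ φ ≠ 0 := by
  obtain ⟨f, hsub, hsupp, hf, -, hone⟩ :=
    exists_contDiff_tsupport_subset (n := ⊤) (Ioi_mem_nhds (zero_lt_one' ℝ))
  refine ⟨fun x => (f x : ℂ), Complex.ofRealCLM.contDiff.comp hf,
    hsupp.comp_left Complex.ofReal_zero, fun x hx => ?_, Function.ne_iff.2 ⟨1, by simp [hone]⟩⟩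
  have hnot : x ∉ tsupport f := fun h => (hsub h).not_ge hx
  simp [image_eq_zero_of_notMem_tsupport hnot]

/-- Failure of the weighted a priori estimate on the model cylinder when the parabola
`{μ² − (ξ + iε)² : ξ ∈ ℝ}` meets the cross-sectional spectrum `{4π²ℓ²/a² : ℓ ∈ ℕ}`:
there is a sequence of smooth, `a`-periodic (in `y`), compactly supported (in `x`) test
functions with uniformly bounded weighted `L²` norm of `(−∂ₓ²−∂_y²−μ²)u_j` and uniformly
bounded unweighted `L²` norm, whose weighted `L²` norms blow up. -/
theorem cylinder_not_fredholm
    (a ε : ℝ) (ha : 0 < a) (hε : 0 < ε) (μ : ℂ)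
    (ξ₀ : ℝ) (ℓ₀ : ℕ)
    (hres : μ ^ 2 - ((ξ₀ : ℂ) + (ε : ℂ) * Complex.I) ^ 2 =
      ((4 * π ^ 2 * (ℓ₀ : ℝ) ^ 2 / a ^ 2 : ℝ) : ℂ)) :
    ∃ (u : ℕ → ℝ → ℝ → ℂ) (C₀ : ℝ), 0 < C₀ ∧
      (∀ j, ContDiff ℝ (⊤ : ℕ∞) (fun p : ℝ × ℝ => u j p.1 p.2)) ∧
      (∀ j, ∀ x y : ℝ, u j x (y + a) = u j x y) ∧
      (∀ j, ∃ K : ℝ, ∀ x y : ℝ, K ≤ |x| → u j x y = 0) ∧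
      (∀ j, (∫ x : ℝ, ∫ y in (0:ℝ)..a, Real.exp (2 * ε * x) *
        ‖-(mixedPartialDeriv 2 0 (u j) x y) - mixedPartialDeriv 0 2 (u j) x y
            - μ ^ 2 * u j x y‖ ^ 2) ≤ C₀) ∧
      (∀ j, (∫ x : ℝ, ∫ y in (0:ℝ)..a, ‖u j x y‖ ^ 2) ≤ C₀) ∧
      Filter.Tendsto
        (fun j => ∫ x : ℝ, ∫ y in (0:ℝ)..a, Real.exp (2 * ε * x) * ‖u j x y‖ ^ 2)
        Filter.atTop Filter.atTop := by
  obtain ⟨φ, hφ, hsupp, hleft, hne⟩ := exists_contDiff_hasCompactSupport_eq_zero_of_nonpos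
  obtain ⟨κ, rfl, hμ⟩ : ∃ κ : ℂ, κ.im = ε ∧ μ ^ 2 = κ ^ 2 + ((2 * π * ℓ₀ / a : ℝ) : ℂ) ^ 2 :=
    ⟨ξ₀ + ε * Complex.I, by simp, by push_cast at hres ⊢; linear_combination hres⟩
  obtain ⟨M, hM⟩ := hφ.continuous.bounded_above_of_compact_support hsupp
  have hφ₂ : ContDiff ℝ 2 φ := mod_cast contDiff_infty.1 hφ 2
  obtain ⟨C, hC⟩ := exists_integral_norm_conjugatedOperator_sq_le κ hφ₂ hsupp
  have hr (j : ℕ) : 0 < ((j : ℝ) + 1)⁻¹ := by positivity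
  have hχ (j : ℕ) : ContDiff ℝ 2 (fun x => φ (((j : ℝ) + 1)⁻¹ * x)) := by fun_prop
  refine ⟨fun j => cutoffWave (fun x => φ (((j : ℝ) + 1)⁻¹ * x)) κ (2 * π * ℓ₀ / a),
    max 1 (a * max C (M ^ 2 / (2 * κ.im))), by positivity,
    fun j => contDiff_cutoffWave (by fun_prop),
    fun j => cutoffWave_add_period (ℓ := ℓ₀) (by field_simp; rw [Int.cast_natCast]),
    fun j => ?_, fun j => le_max_of_le_right ?_, fun j => le_max_of_le_right ?_, ?_⟩
  · obtain ⟨K, -, hK⟩ := (hsupp.comp_smul (hr j).ne').exists_pos_le_norm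
    exact ⟨K, fun x y hx => by simp [cutoffWave, ← smul_eq_mul, hK x hx]⟩
  · simp only [neg_laplacian_sub_cutoffWave (hχ j) hμ, integral_exp_mul_norm_cutoffWave_sq]
    gcongr
    exact le_max_of_le_left (hC _ (hr j) (inv_le_one_of_one_le₀ (by simp)))
  · rw [integral_norm_cutoffWave_sq]
    gcongr
    exact le_max_of_le_right (integral_exp_neg_mul_norm_sq_le (by positivity)
      (fun x hx => hleft _ (mul_nonpos_of_nonneg_of_nonpos (hr j).le hx)) fun x => hM _)
  · simp only [integral_exp_mul_norm_cutoffWave_sq]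
    exact ((tendsto_integral_norm_comp_inv_mul_sq_atTop hφ.continuous hsupp hne).comp
      (Filter.tendsto_atTop_add_const_right _ 1 tendsto_natCast_atTop_atTop)).const_mul_atTop ha
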